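/- arXiv:2305.05376 — 2 statements merged into one kernel-verified Lean document; each statement's English description precedes it below -/
import Mathlib

section
/- Let f : (X, 𝒯) → (Y, 𝒰) be a function between fuzzy topological spaces. Then f is a somewhat fuzzy open function if and only if f is a somewhat fuzzy semiopen function. -/
/-!
Since `1` is open, `0` is closed, so `Cl 0 = 0` and a semiopen set `μ ≤ Cl (Int μ)` with zero
interior vanishes. By monotonicity of `Int`, if `Int l = 0` then every semiopen set below `l`
vanishes, that is, `Int_s l = 0`. Open sets are semiopen, hence `Int l ≤ Int_s l`, which gives the
converse. So somewhat open and somewhat semiopen are the same property of a fuzzy set, and in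
particular of the images of open sets under `f`.
-/

open unitInterval

/-- `Fact` instance making the unit interval `I = [0,1]` a complete lattice. -/
instance : Fact ((0:ℝ) ≤ 1) := ⟨zero_le_one⟩

namespace SomewhatFuzzy

variable {X Y : Type*}

/-- A fuzzy topology on `X` is a collection `T` of fuzzy sets (functions `X → [0,1]`,
ordered pointwise) containing the constant functions `0` and `1`, closed under
pointwise minimum of two members, and closed under pointwise supremum of any
subfamily. -/
def IsFuzzyTopology (T : Set (X → I)) : Prop :=
  (fun _ => (0 : I)) ∈ T ∧ (fun _ => (1 : I)) ∈ T ∧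
    (∀ μ ν, μ ∈ T → ν ∈ T → (fun x => μ x ⊓ ν x) ∈ T) ∧
    (∀ S : Set (X → I), S ⊆ T → (fun x => ⨆ μ ∈ S, μ x) ∈ T)

/-- The fuzzy interior of `l`: the pointwise supremum of all fuzzy open sets `≤ l`. -/
noncomputable def fInterior (T : Set (X → I)) (l : X → I) : X → I :=
  fun x => ⨆ μ ∈ {μ : X → I | μ ∈ T ∧ μ ≤ l}, μ x

/-- A fuzzy set `μ` is fuzzy closed if `1 - μ` is fuzzy open. -/
def IsFuzzyClosed (T : Set (X → I)) (μ : X → I) : Prop :=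
  (fun x => unitInterval.symm (μ x)) ∈ T

/-- The fuzzy closure of `l`: the pointwise infimum of all fuzzy closed sets `≥ l`. -/
noncomputable def fClosure (T : Set (X → I)) (l : X → I) : X → I :=
  fun x => ⨅ μ ∈ {μ : X → I | IsFuzzyClosed T μ ∧ l ≤ μ}, μ x

/-- A fuzzy set `l` is fuzzy semiopen if `l ≤ Cl(Int(l))`. -/
def IsFuzzySemiopen (T : Set (X → I)) (l : X → I) : Prop :=
  l ≤ fClosure T (fInterior T l)

/-- The fuzzy semi-interior of `l`: the pointwise supremum of all fuzzy semiopen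
sets `≤ l`. -/
noncomputable def fSemiInterior (T : Set (X → I)) (l : X → I) : X → I :=
  fun x => ⨆ μ ∈ {μ : X → I | IsFuzzySemiopen T μ ∧ μ ≤ l}, μ x

/-- A fuzzy set `μ` is fuzzy semiclosed if `1 - μ` is fuzzy semiopen. -/
def IsFuzzySemiclosed (T : Set (X → I)) (μ : X → I) : Prop :=
  IsFuzzySemiopen T (fun x => unitInterval.symm (μ x))

/-- The fuzzy semi-closure of `l`: the pointwise infimum of all fuzzy semiclosed
sets `≥ l`. -/
noncomputable def fSemiClosure (T : Set (X → I)) (l : X → I) : X → I :=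
  fun x => ⨅ μ ∈ {μ : X → I | IsFuzzySemiclosed T μ ∧ l ≤ μ}, μ x

/-- A fuzzy set `l` is somewhat fuzzy open if `l = 0` or `Int(l) ≠ 0`. -/
def SomewhatFuzzyOpen (T : Set (X → I)) (l : X → I) : Prop :=
  l = (fun _ => (0 : I)) ∨ fInterior T l ≠ (fun _ => (0 : I))

/-- A fuzzy set `l` is somewhat fuzzy semiopen if `l = 0` or `Int_s(l) ≠ 0`. -/
def SomewhatFuzzySemiopen (T : Set (X → I)) (l : X → I) : Prop :=
  l = (fun _ => (0 : I)) ∨ fSemiInterior T l ≠ (fun _ => (0 : I))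

/-- Preimage of a fuzzy set under a function: `f⁻¹(β) = β ∘ f`. -/
def fPreimage (f : X → Y) (b : Y → I) : X → I := fun x => b (f x)

/-- Image of a fuzzy set under a function:
`f(α)(y) = sup {α x : f x = y}` (supremum over the empty set being `0`). -/
noncomputable def fImage (f : X → Y) (a : X → I) : Y → I :=
  fun y => ⨆ x ∈ {x : X | f x = y}, a x

/-- `f` is fuzzy continuous if the preimage of every fuzzy open set is fuzzy open. -/
def FuzzyContinuous (T : Set (X → I)) (U : Set (Y → I)) (f : X → Y) : Prop :=
  ∀ b ∈ U, fPreimage f b ∈ T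

/-- `f` is fuzzy semicontinuous if the preimage of every fuzzy open set is fuzzy
semiopen. -/
def FuzzySemicontinuous (T : Set (X → I)) (U : Set (Y → I)) (f : X → Y) : Prop :=
  ∀ b ∈ U, IsFuzzySemiopen T (fPreimage f b)

/-- `f` is somewhat fuzzy continuous if the preimage of every fuzzy open set is
somewhat fuzzy open. -/
def SomewhatFuzzyContinuous (T : Set (X → I)) (U : Set (Y → I)) (f : X → Y) : Prop :=
  ∀ b ∈ U, SomewhatFuzzyOpen T (fPreimage f b)

/-- `f` is somewhat fuzzy semicontinuous if the preimage of every fuzzy open set is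
somewhat fuzzy semiopen. -/
def SomewhatFuzzySemicontinuous (T : Set (X → I)) (U : Set (Y → I)) (f : X → Y) : Prop :=
  ∀ b ∈ U, SomewhatFuzzySemiopen T (fPreimage f b)

/-- `f` is a fuzzy open function if the image of every fuzzy open set is fuzzy open. -/
def FuzzyOpenMap (T : Set (X → I)) (U : Set (Y → I)) (f : X → Y) : Prop :=
  ∀ a ∈ T, fImage f a ∈ U

/-- `f` is a fuzzy semiopen function if the image of every fuzzy open set is fuzzy
semiopen. -/
def FuzzySemiopenMap (T : Set (X → I)) (U : Set (Y → I)) (f : X → Y) : Prop :=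
  ∀ a ∈ T, IsFuzzySemiopen U (fImage f a)

/-- `f` is a somewhat fuzzy open function if the image of every fuzzy open set is
somewhat fuzzy open. -/
def SomewhatFuzzyOpenMap (T : Set (X → I)) (U : Set (Y → I)) (f : X → Y) : Prop :=
  ∀ a ∈ T, SomewhatFuzzyOpen U (fImage f a)

/-- `f` is a somewhat fuzzy semiopen function if the image of every fuzzy open set is
somewhat fuzzy semiopen. -/
def SomewhatFuzzySemiopenMap (T : Set (X → I)) (U : Set (Y → I)) (f : X → Y) : Prop :=
  ∀ a ∈ T, SomewhatFuzzySemiopen U (fImage f a)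

section Operators

variable (T : Set (X → I)) (l : X → I)

theorem isLUB_fInterior : IsLUB {μ | μ ∈ T ∧ μ ≤ l} (fInterior T l) :=
  isLUB_pi.2 fun _ => isLUB_biSup

theorem isLUB_fSemiInterior : IsLUB {μ | IsFuzzySemiopen T μ ∧ μ ≤ l} (fSemiInterior T l) :=
  isLUB_pi.2 fun _ => isLUB_biSup

theorem isGLB_fClosure : IsGLB {μ | IsFuzzyClosed T μ ∧ l ≤ μ} (fClosure T l) :=
  isGLB_pi.2 fun _ => isGLB_biInf

theorem le_fClosure : l ≤ fClosure T l :=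
  (isGLB_fClosure T l).2 fun _ hμ => hμ.2

end Operators

variable {T : Set (X → I)} {l m : X → I}

theorem fInterior_mono (h : l ≤ m) : fInterior T l ≤ fInterior T m :=
  (isLUB_fInterior T l).mono (isLUB_fInterior T m) fun _ hμ => ⟨hμ.1, hμ.2.trans h⟩

theorem fInterior_eq_self_of_mem (h : l ∈ T) : fInterior T l = l :=
  le_antisymm ((isLUB_fInterior T l).2 fun _ hμ => hμ.2) ((isLUB_fInterior T l).1 ⟨h, le_rfl⟩)

theorem isFuzzySemiopen_of_mem (h : l ∈ T) : IsFuzzySemiopen T l := by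
  rw [IsFuzzySemiopen, fInterior_eq_self_of_mem h]
  exact le_fClosure T l

theorem fInterior_le_fSemiInterior (T : Set (X → I)) (l : X → I) :
    fInterior T l ≤ fSemiInterior T l :=
  (isLUB_fInterior T l).mono (isLUB_fSemiInterior T l) fun _ hμ =>
    ⟨isFuzzySemiopen_of_mem hμ.1, hμ.2⟩

theorem eq_zero_of_le_zero (h : l ≤ 0) : l = 0 :=
  h.antisymm fun _ => unitInterval.nonneg'

theorem isFuzzyClosed_zero (h1 : 1 ∈ T) : IsFuzzyClosed T 0 := by
  simp only [IsFuzzyClosed, Pi.zero_apply, unitInterval.symm_zero]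
  exact h1

theorem fClosure_zero (h1 : 1 ∈ T) : fClosure T 0 = 0 :=
  eq_zero_of_le_zero ((isGLB_fClosure T 0).1 ⟨isFuzzyClosed_zero h1, le_rfl⟩)

theorem IsFuzzySemiopen.eq_zero_of_fInterior_eq_zero (hl : IsFuzzySemiopen T l) (h1 : 1 ∈ T)
    (h : fInterior T l = 0) : l = 0 := by
  rw [IsFuzzySemiopen, h, fClosure_zero h1] at hl
  exact eq_zero_of_le_zero hl

theorem fSemiInterior_eq_zero_iff (h1 : 1 ∈ T) : fSemiInterior T l = 0 ↔ fInterior T l = 0 := by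
  refine ⟨fun h => eq_zero_of_le_zero (h ▸ fInterior_le_fSemiInterior T l), fun h => ?_⟩
  refine eq_zero_of_le_zero ((isLUB_fSemiInterior T l).2 ?_)
  rintro μ ⟨hμ, hμl⟩
  have hInt : fInterior T μ = 0 := eq_zero_of_le_zero (h ▸ fInterior_mono hμl)
  exact (hμ.eq_zero_of_fInterior_eq_zero h1 hInt).le

theorem somewhatFuzzyOpen_iff_somewhatFuzzySemiopen (h1 : 1 ∈ T) :
    SomewhatFuzzyOpen T l ↔ SomewhatFuzzySemiopen T l :=
  or_congr_right (fSemiInterior_eq_zero_iff h1).not.symm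

theorem somewhatFuzzyOpenMap_iff_somewhatFuzzySemiopenMap_general
    (T : Set (X → I)) {U : Set (Y → I)} (h1 : 1 ∈ U) (f : X → Y) :
    SomewhatFuzzyOpenMap T U f ↔ SomewhatFuzzySemiopenMap T U f :=
  forall₂_congr fun _ _ => somewhatFuzzyOpen_iff_somewhatFuzzySemiopen h1

/-- Theorem 2.5(2): `f` is a somewhat fuzzy open function iff it is a somewhat fuzzy
semiopen function. -/
theorem somewhatFuzzyOpenMap_iff_somewhatFuzzySemiopenMap
    {X Y : Type*} (T : Set (X → I)) (U : Set (Y → I))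
    (hT : IsFuzzyTopology T) (hU : IsFuzzyTopology U) (f : X → Y) :
    SomewhatFuzzyOpenMap T U f ↔ SomewhatFuzzySemiopenMap T U f := by
  exact somewhatFuzzyOpenMap_iff_somewhatFuzzySemiopenMap_general T hU.2.1 f

end SomewhatFuzzy
end

section
/- Let f : (X, 𝒯) → (Y, 𝒰) be a function between fuzzy topological spaces. If f is a fuzzy semiopen function, then f is a somewhat fuzzy open function. -/
open unitInterval

namespace SomewhatFuzzy

variable {X Y : Type*}

theorem fClosure_le {T : Set (X → I)} {l μ : X → I} (hμ : IsFuzzyClosed T μ) (hl : l ≤ μ) :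
    fClosure T l ≤ μ :=
  fun x => iInf₂_le (f := fun (ν : X → I) (_ : IsFuzzyClosed T ν ∧ l ≤ ν) => ν x) μ ⟨hμ, hl⟩

theorem isFuzzyClosed_zero_iff {T : Set (X → I)} :
    IsFuzzyClosed T (fun _ => (0 : I)) ↔ (fun _ => (1 : I)) ∈ T := by
  simp only [IsFuzzyClosed, symm_zero]

theorem fClosure_zero_s12 {T : Set (X → I)} (hT : (fun _ => (1 : I)) ∈ T) :
    fClosure T (fun _ => (0 : I)) = fun _ => (0 : I) :=
  le_antisymm (fClosure_le (isFuzzyClosed_zero_iff.mpr hT) le_rfl) fun _ => nonneg'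

theorem IsFuzzySemiopen.eq_zero_of_fInterior_eq_zero_s12 {T : Set (X → I)} {l : X → I}
    (hl : IsFuzzySemiopen T l) (hT : (fun _ => (1 : I)) ∈ T)
    (hint : fInterior T l = fun _ => (0 : I)) : l = fun _ => (0 : I) := by
  refine le_antisymm ?_ fun _ => nonneg'
  calc
    l ≤ fClosure T (fInterior T l) := hl
    _ = fun _ => (0 : I) := by rw [hint, fClosure_zero_s12 hT]

theorem IsFuzzySemiopen.somewhatFuzzyOpen {T : Set (X → I)} {l : X → I}
    (hl : IsFuzzySemiopen T l) (hT : (fun _ => (1 : I)) ∈ T) : SomewhatFuzzyOpen T l :=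
  or_iff_not_imp_right.mpr fun hint =>
    hl.eq_zero_of_fInterior_eq_zero_s12 hT (not_not.mp hint)

theorem somewhatFuzzyOpenMap_of_fuzzySemiopenMap_general
    {T : Set (X → I)} {U : Set (Y → I)} (hU : (fun _ => (1 : I)) ∈ U) {f : X → Y}
    (hf : FuzzySemiopenMap T U f) : SomewhatFuzzyOpenMap T U f :=
  fun a ha => (hf a ha).somewhatFuzzyOpen hU

/-- Every fuzzy semiopen function is a somewhat fuzzy open function. -/
theorem somewhatFuzzyOpenMap_of_fuzzySemiopenMap
    {X Y : Type*} (T : Set (X → I)) (U : Set (Y → I))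
    (hT : IsFuzzyTopology T) (hU : IsFuzzyTopology U) (f : X → Y)
    (hf : FuzzySemiopenMap T U f) :
    SomewhatFuzzyOpenMap T U f :=
  somewhatFuzzyOpenMap_of_fuzzySemiopenMap_general hU.2.1 hf

end SomewhatFuzzy
end
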